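/- Let X be a Tychonoff space and let λ, μ ∈ Ψ with μ ⊆ λ. Then C(X) satisfies S_fin((Ω_0)^λ, (Ω_0)^μ) if and only if X has property S_fin(Λ(λ), Λ(μ)). -/

import Mathlib

open Set Filter Topology TopologicalSpace ContinuousMap

/-- A subset `A` of `X` is *C-compact* if `f '' A` is compact in `ℝ` for every
continuous real-valued function `f` on `X`. -/
def IsCCompact {X : Type*} [TopologicalSpace X] (A : Set X) : Prop :=
  ∀ f : C(X, ℝ), IsCompact (f '' A)

/-- The `λ`-open (set-open) topology on `C(X, ℝ)`, generated by the subbasic sets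
`[F, U] = {f : f '' F ⊆ U}` for `F ∈ lam` and `U ⊆ ℝ` open. -/
def setOpenTopology {X : Type*} [TopologicalSpace X] (lam : Set (Set X)) :
    TopologicalSpace C(X, ℝ) :=
  TopologicalSpace.generateFrom
    {S | ∃ F ∈ lam, ∃ U : Set ℝ, IsOpen U ∧ S = {f : C(X, ℝ) | f '' F ⊆ U}}

/-- Membership in the collection `Ψ`: a family of nonempty closed C-compact subsets of `X`
forming a π-network, hereditary with respect to (closed) C-compact subsets of its elements,
and maximal among families of nonempty sets inducing the same set-open topology. -/
structure MemPsi {X : Type*} [TopologicalSpace X] (lam : Set (Set X)) : Prop where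
  nonempty : ∀ A ∈ lam, A.Nonempty
  closed : ∀ A ∈ lam, IsClosed A
  ccompact : ∀ A ∈ lam, IsCCompact A
  piNetwork : ∀ U : Set X, IsOpen U → U.Nonempty → ∃ A ∈ lam, A ⊆ U
  hereditary : ∀ A ∈ lam, ∀ B : Set X, B ⊆ A → B.Nonempty → IsClosed B → IsCCompact B →
    B ∈ lam
  maximal : ∀ lam' : Set (Set X), (∀ A ∈ lam', A.Nonempty) →
    setOpenTopology lam' = setOpenTopology lam → lam' ⊆ lam

/-- A cozero (functional open) subset of `X`: the complement of a zero-set. -/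
def IsCozero {X : Type*} [TopologicalSpace X] (U : Set X) : Prop :=
  ∃ f : C(X, ℝ), U = {x | f x ≠ 0}

/-- `𝒰` is a `λ`-f-cover: a family of cozero sets, not containing `X`, such that every
member of `lam` is contained in some member of `𝒰`. -/
def IsFCover {X : Type*} [TopologicalSpace X] (lam : Set (Set X)) (𝒰 : Set (Set X)) : Prop :=
  (Set.univ : Set X) ∉ 𝒰 ∧ (∀ U ∈ 𝒰, IsCozero U) ∧ ∀ A ∈ lam, ∃ U ∈ 𝒰, A ⊆ U

/-- `Λ(λ)`: the collection of all `λ`-f-covers of `X`. -/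
def fCovers {X : Type*} [TopologicalSpace X] (lam : Set (Set X)) : Set (Set (Set X)) :=
  {𝒰 | IsFCover lam 𝒰}

/-- The selection principle `S₁(𝒜, ℬ)`. -/
def S1 {α : Type*} (𝒜 ℬ : Set (Set α)) : Prop :=
  ∀ A : ℕ → Set α, (∀ n, A n ∈ 𝒜) →
    ∃ b : ℕ → α, (∀ n, b n ∈ A n) ∧ Set.range b ∈ ℬ

/-- The selection principle `S_fin(𝒜, ℬ)`. -/
def Sfin {α : Type*} (𝒜 ℬ : Set (Set α)) : Prop :=
  ∀ A : ℕ → Set α, (∀ n, A n ∈ 𝒜) →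
    ∃ B : ℕ → Set α, (∀ n, (B n).Finite ∧ B n ⊆ A n) ∧ (⋃ n, B n) ∈ ℬ

/-- `Ω_y` with respect to the topology `t`: sets having `y` in their closure but not
containing `y`. -/
def OmegaPt {Y : Type*} (t : TopologicalSpace Y) (y : Y) : Set (Set Y) :=
  {A | y ∈ @closure Y t A ∧ y ∉ A}

/-- Countable `(t₁, t₂)`-tightness of a bitopological space. -/
def CountableBiTightness {Y : Type*} (t1 t2 : TopologicalSpace Y) : Prop :=
  ∀ A : Set Y, ∀ f ∈ @closure Y t1 A, ∃ B ⊆ A, B.Countable ∧ f ∈ @closure Y t2 B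

/-- `X` is `λ`-`μ`-Lindelöf: every `λ`-f-cover has a countable subfamily which is a
`μ`-f-cover. -/
def LamMuLindelof {X : Type*} [TopologicalSpace X] (lam mu : Set (Set X)) : Prop :=
  ∀ 𝒰 : Set (Set X), IsFCover lam 𝒰 → ∃ 𝒱 ⊆ 𝒰, 𝒱.Countable ∧ IsFCover mu 𝒱

/-- Countable `(t₁, t₂)`-T-tightness: for every uncountable regular cardinal `κ` and every
increasing `κ`-indexed sequence of `t₁`-closed sets, the union is `t₂`-closed. -/
def CountableBiTTightness {Y : Type*} (t1 t2 : TopologicalSpace Y) : Prop :=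
  ∀ κ : Cardinal.{0}, Cardinal.aleph0 < κ → κ.IsRegular →
    ∀ A : κ.ord.ToType → Set Y, Monotone A → (∀ α, @IsClosed Y t1 (A α)) →
      @IsClosed Y t2 (⋃ α, A α)

/-- `X` is separably `λ`-submetrizable: there is a continuous map of `X` onto a separable
metric space which is one-to-one on `⋃ lam`. -/
def SeparablyLamSubmetrizable (X : Type*) [TopologicalSpace X] (lam : Set (Set X)) : Prop :=
  ∃ (Y : Type) (m : MetricSpace Y),
    @SeparableSpace Y m.toPseudoMetricSpace.toUniformSpace.toTopologicalSpace ∧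
    ∃ f : X → Y,
      @Continuous X Y _ m.toPseudoMetricSpace.toUniformSpace.toTopologicalSpace f ∧
      Function.Surjective f ∧ Set.InjOn f (⋃₀ lam)

/-- `R`-separability for a pair of topologies: from every sequence of `t₁`-dense sets one
can pick single points forming a `t₂`-dense set. -/
def RSepBi {Y : Type*} (t1 t2 : TopologicalSpace Y) : Prop :=
  ∀ D : ℕ → Set Y, (∀ n, @Dense Y t1 (D n)) →
    ∃ d : ℕ → Y, (∀ n, d n ∈ D n) ∧ @Dense Y t2 (Set.range d)

/-- `M`-separability for a pair of topologies. -/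
def MSepBi {Y : Type*} (t1 t2 : TopologicalSpace Y) : Prop :=
  ∀ D : ℕ → Set Y, (∀ n, @Dense Y t1 (D n)) →
    ∃ F : ℕ → Set Y, (∀ n, (F n).Finite ∧ F n ⊆ D n) ∧ @Dense Y t2 (⋃ n, F n)

/-- `H`-separability for a pair of topologies. -/
def HSepBi {Y : Type*} (t1 t2 : TopologicalSpace Y) : Prop :=
  ∀ D : ℕ → Set Y, (∀ n, @Dense Y t1 (D n)) →
    ∃ F : ℕ → Set Y, (∀ n, (F n).Finite ∧ F n ⊆ D n) ∧
      ∀ G : Set Y, @IsOpen Y t2 G → G.Nonempty →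
        ∀ᶠ n in Filter.atTop, (G ∩ F n).Nonempty

/-- A countable set `D` is groupable with respect to the topology `t`. -/
def GroupableIn {Y : Type*} (t : TopologicalSpace Y) (D : Set Y) : Prop :=
  ∃ A : ℕ → Set Y, (∀ n, (A n).Finite) ∧ D = ⋃ n, A n ∧
    ∀ G : Set Y, @IsOpen Y t G → G.Nonempty →
      ∀ᶠ n in Filter.atTop, (G ∩ A n).Nonempty

/-- `GN`-separability for a pair of topologies. -/
def GNSepBi {Y : Type*} (t1 t2 : TopologicalSpace Y) : Prop :=
  ∀ D : ℕ → Set Y, (∀ n, @Dense Y t1 (D n)) →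
    ∃ d : ℕ → Y, (∀ n, d n ∈ D n) ∧ @Dense Y t2 (Set.range d) ∧
      GroupableIn t2 (Set.range d)

/-- The `(t₁, t₂)`-Pytkeev property for a bitopological space. -/
def PytkeevBi {Y : Type*} (t1 t2 : TopologicalSpace Y) : Prop :=
  ∀ A : Set Y, ∀ g ∈ @closure Y t1 A, g ∉ A →
    ∃ B : ℕ → Set Y, (∀ n, (B n).Infinite ∧ B n ⊆ A) ∧
      ∀ G ∈ @nhds Y t2 g, ∃ n, B n ⊆ G

/-- A groupable `μ`-f-cover. -/
def GroupableFCover {X : Type*} [TopologicalSpace X] (mu 𝒱 : Set (Set X)) : Prop :=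
  𝒱.Countable ∧ IsFCover mu 𝒱 ∧
    ∃ G : ℕ → Set (Set X), (∀ m, (G m).Finite) ∧
      (Pairwise fun m k => Disjoint (G m) (G k)) ∧ 𝒱 = ⋃ m, G m ∧
      ∀ F ∈ mu, ∀ᶠ m in Filter.atTop, ∃ U ∈ G m, F ⊆ U

/-!
Near a constant function, the set-open topology of a directed family `lam` is the topology of
uniform convergence on the members of `lam`. So `0` lies in the closure of `S` exactly when, for all
`ε > 0`, the sets `f ⁻¹' ball 0 ε` with `f ∈ S` form a `lam`-cover, and these sets are cozero. For a
fixed `ε` a selection from these covers is the image of a selection from the sets of functions; all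
`ε` are served at once by splitting `ℕ` into countably many infinite pieces. Conversely, a cover `𝒰`
is coded by the functions equal to `1` off some member of `𝒰`: such a function can vanish on a given
C-compact subset of that member, and the member contains every set on which the function is less
than `1` in absolute value.
-/

section SelectionPrinciples

variable {α β : Type*}

theorem Sfin.mono {𝒜 𝒜' ℬ ℬ' : Set (Set α)} (h : Sfin 𝒜 ℬ) (h𝒜 : 𝒜' ⊆ 𝒜) (hℬ : ℬ ⊆ ℬ') :
    Sfin 𝒜' ℬ' := by
  intro A hA
  obtain ⟨B, hBA, hB⟩ := h A fun n => h𝒜 (hA n)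
  exact ⟨B, hBA, hℬ hB⟩

theorem sfin_of_empty_mem {𝒜 ℬ : Set (Set α)} (h : ∅ ∈ ℬ) : Sfin 𝒜 ℬ :=
  fun A _ => ⟨fun _ => ∅, fun n => ⟨finite_empty, empty_subset (A n)⟩, by rwa [iUnion_empty]⟩

theorem Sfin.exists_image_iUnion_mem {𝒜 ℬ : Set (Set β)} (h : Sfin 𝒜 ℬ) (φ : α → β)
    {A : ℕ → Set α} (hA : ∀ n, φ '' A n ∈ 𝒜) :
    ∃ B : ℕ → Set α, (∀ n, (B n).Finite ∧ B n ⊆ A n) ∧ φ '' (⋃ n, B n) ∈ ℬ := by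
  obtain ⟨V, hVA, hV⟩ := h _ hA
  choose B hBA hBfin hBV using fun n => exists_subset_image_finite_and.1
    ⟨V n, (hVA n).2, (hVA n).1, (rfl : V n = V n)⟩
  refine ⟨B, fun n => ⟨hBfin n, hBA n⟩, ?_⟩
  rw [image_iUnion]
  simpa only [hBV] using hV

theorem sfin_of_forall_sfin {𝒜 ℬ : Set (Set α)} {𝒞 : ℕ → Set (Set α)}
    (h : ∀ k, Sfin 𝒜 (𝒞 k))
    (hℬ : ∀ B : ℕ → Set α, (∀ k, B k ∈ 𝒞 k) → ⋃ k, B k ∈ ℬ) : Sfin 𝒜 ℬ := by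
  intro A hA
  choose B hBA hB using fun k => h k (fun j => A (Nat.pair k j)) fun j => hA (Nat.pair k j)
  refine ⟨fun n => B n.unpair.1 n.unpair.2, fun n => ?_, ?_⟩
  · simpa only [Nat.pair_unpair] using hBA n.unpair.1 n.unpair.2
  · rw [iUnion_unpair]
    exact hℬ _ hB

theorem omegaPt_eq_empty {Y : Type*} [Subsingleton Y] (t : TopologicalSpace Y) (y : Y) :
    OmegaPt t y = ∅ := by
  refine eq_empty_of_forall_notMem fun S ⟨hcl, hy⟩ => ?_
  obtain ⟨z, hz⟩ := (@closure_nonempty_iff _ t S).1 ⟨y, hcl⟩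
  exact hy (Subsingleton.elim z y ▸ hz)

theorem sfin_omegaPt_of_subsingleton {Y : Type*} [Subsingleton Y] (t : TopologicalSpace Y) (y : Y)
    (ℬ : Set (Set Y)) : Sfin (OmegaPt t y) ℬ := by
  intro A hA
  exact absurd (hA 0) (omegaPt_eq_empty t y ▸ notMem_empty (A 0))

end SelectionPrinciples

theorem subset_of_mapsTo_ball_of_eqOn_one {α : Type*} {f : α → ℝ} {K U : Set α}
    (hK : MapsTo f K (Metric.ball 0 1)) (hU : EqOn f 1 Uᶜ) : K ⊆ U := by
  intro x hx
  by_contra hxU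
  simpa [hU hxU] using hK hx

section

variable {X : Type*} [TopologicalSpace X] {lam mu : Set (Set X)}

theorem setOpenTopology_insert_union {A B : Set X} (hA : A ∈ lam) (hB : B ∈ lam) :
    setOpenTopology (insert (A ∪ B) lam) = setOpenTopology lam := by
  refine le_antisymm (generateFrom_anti ?_) (le_generateFrom ?_)
  · rintro S ⟨F, hF, U, hU, rfl⟩
    exact ⟨F, mem_insert_of_mem _ hF, U, hU, rfl⟩
  · rintro S ⟨F, rfl | hF, U, hU, rfl⟩
    · simp only [image_union, union_subset_iff, ofPred_and]
      exact GenerateOpen.inter _ _ (.basic _ ⟨A, hA, U, hU, rfl⟩) (.basic _ ⟨B, hB, U, hU, rfl⟩)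
    · exact GenerateOpen.basic _ ⟨F, hF, U, hU, rfl⟩

theorem MemPsi.union_mem (h : MemPsi lam) {A B : Set X} (hA : A ∈ lam) (hB : B ∈ lam) :
    A ∪ B ∈ lam := by
  refine h.maximal (insert (A ∪ B) lam) ?_ (setOpenTopology_insert_union hA hB) (mem_insert _ _)
  rintro C (rfl | hC)
  · exact (h.nonempty A hA).inl
  · exact h.nonempty C hC

theorem MemPsi.directedOn (h : MemPsi lam) : DirectedOn (· ⊆ ·) lam :=
  fun _ hA _ hB => ⟨_, h.union_mem hA hB, subset_union_left, subset_union_right⟩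

theorem MemPsi.family_nonempty [Nonempty X] (h : MemPsi lam) : lam.Nonempty :=
  let ⟨A, hA, _⟩ := h.piNetwork univ isOpen_univ univ_nonempty
  ⟨A, hA⟩

theorem nhds_const_setOpenTopology (c : ℝ) :
    @nhds _ (setOpenTopology lam) (const X c) =
      ⨅ (p : Set X × ℝ) (_ : p.1 ∈ lam ∧ 0 < p.2),
        𝓟 {f : C(X, ℝ) | MapsTo f p.1 (Metric.ball c p.2)} := by
  rw [setOpenTopology, nhds_generateFrom]
  refine le_antisymm (le_iInf₂ fun p hp => ?_) (le_iInf₂ ?_)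
  · simp only [mapsTo_iff_image_subset]
    refine iInf₂_le _ ⟨?_, p.1, hp.1, _, Metric.isOpen_ball, rfl⟩
    rintro _ ⟨x, -, rfl⟩
    exact Metric.mem_ball_self hp.2
  · rintro _ ⟨hc, F, hF, U, hU, rfl⟩
    obtain ⟨ε, hε, hball⟩ : ∃ ε > 0, F.Nonempty → Metric.ball c ε ⊆ U := by
      rcases F.eq_empty_or_nonempty with rfl | ⟨x, hx⟩
      · exact ⟨1, one_pos, fun h => absurd h not_nonempty_empty⟩
      · obtain ⟨ε, hε, hball⟩ := Metric.isOpen_iff.1 hU c (hc ⟨x, hx, rfl⟩)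
        exact ⟨ε, hε, fun _ => hball⟩
    refine iInf₂_le_of_le (F, ε) ⟨hF, hε⟩ (principal_mono.2 ?_)
    rintro f hf _ ⟨x, hx, rfl⟩
    exact hball ⟨x, hx⟩ (hf hx)

theorem hasBasis_nhds_const_setOpenTopology (hne : lam.Nonempty)
    (hdir : DirectedOn (· ⊆ ·) lam) (c : ℝ) :
    (@nhds _ (setOpenTopology lam) (const X c)).HasBasis
      (fun p : Set X × ℝ => p.1 ∈ lam ∧ 0 < p.2)
      fun p => {f | MapsTo f p.1 (Metric.ball c p.2)} := by
  rw [nhds_const_setOpenTopology]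
  refine hasBasis_biInf_principal' ?_ ?_
  · rintro ⟨A, ε⟩ ⟨hA, hε⟩ ⟨B, δ⟩ ⟨hB, hδ⟩
    obtain ⟨C, hC, hAC, hBC⟩ := hdir A hA B hB
    exact ⟨(C, min ε δ), ⟨hC, lt_min hε hδ⟩,
      fun f hf => hf.mono hAC (Metric.ball_subset_ball (min_le_left ε δ)),
      fun f hf => hf.mono hBC (Metric.ball_subset_ball (min_le_right ε δ))⟩
  · obtain ⟨A, hA⟩ := hne
    exact ⟨(A, 1), hA, one_pos⟩

/-- The sets of nonzero functions that approximate the zero function within `ε` on each member of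
`lam`: the fixed-`ε` version of `OmegaPt (setOpenTopology lam) 0`. -/
def zeroApproximating (lam : Set (Set X)) (ε : ℝ) : Set (Set C(X, ℝ)) :=
  {S | 0 ∉ S ∧ ∀ K ∈ lam, ∃ f ∈ S, MapsTo f K (Metric.ball 0 ε)}

theorem mem_omegaPt_zero_iff (hne : lam.Nonempty) (hdir : DirectedOn (· ⊆ ·) lam)
    {S : Set C(X, ℝ)} :
    S ∈ OmegaPt (setOpenTopology lam) 0 ↔ ∀ ε > 0, S ∈ zeroApproximating lam ε := by
  let := setOpenTopology lam
  have hcl : (0 : C(X, ℝ)) ∈ closure S ↔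
      ∀ K ∈ lam, ∀ ε > 0, ∃ f ∈ S, MapsTo f K (Metric.ball 0 ε) :=
    (mem_closure_iff_nhds_basis (hasBasis_nhds_const_setOpenTopology hne hdir 0)).trans
      ⟨fun h K hK ε hε => h (K, ε) ⟨hK, hε⟩, fun h p hp => h p.1 hp.1 p.2 hp.2⟩
  constructor
  · rintro ⟨h0, hS⟩ ε hε
    exact ⟨hS, fun K hK => hcl.1 h0 K hK ε hε⟩
  · intro h
    exact ⟨hcl.2 fun K hK ε hε => (h ε hε).2 K hK, (h 1 one_pos).1⟩

theorem iUnion_mem_omegaPt_zero (hne : lam.Nonempty) (hdir : DirectedOn (· ⊆ ·) lam)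
    {B : ℕ → Set C(X, ℝ)} (hB : ∀ k : ℕ, B k ∈ zeroApproximating lam (1 / ((k : ℝ) + 1))) :
    ⋃ k, B k ∈ OmegaPt (setOpenTopology lam) 0 := by
  refine (mem_omegaPt_zero_iff hne hdir).2 fun ε hε => ⟨?_, fun K hK => ?_⟩
  · exact fun h0 => let ⟨k, hk⟩ := mem_iUnion.1 h0; (hB k).1 hk
  · obtain ⟨k, hk⟩ := exists_nat_one_div_lt hε
    obtain ⟨f, hf, hfK⟩ := (hB k).2 K hK
    exact ⟨f, mem_iUnion_of_mem k hf, hfK.mono_right (Metric.ball_subset_ball hk.le)⟩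

theorem isCozero_preimage {U : Set ℝ} (hU : IsOpen U) (f : C(X, ℝ)) : IsCozero (f ⁻¹' U) := by
  rcases Uᶜ.eq_empty_or_nonempty with hUc | hUc
  · exact ⟨1, by simp [compl_empty_iff.1 hUc]⟩
  · refine ⟨⟨fun x => Metric.infDist (f x) Uᶜ, by fun_prop⟩, ?_⟩
    ext x
    simpa using (hU.isClosed_compl.mem_iff_infDist_zero hUc (x := f x)).not

theorem IsCCompact.exists_eqOn_zero_one {A U : Set X} (hA : IsCCompact A) (hU : IsCozero U)
    (hAU : A ⊆ U) : ∃ f : C(X, ℝ), EqOn f 0 A ∧ EqOn f 1 Uᶜ := by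
  obtain ⟨g, rfl⟩ := hU
  have hdisj : Disjoint (g '' A) {0} := by
    rw [disjoint_singleton_right]
    rintro ⟨x, hx, hgx⟩
    exact hAU hx hgx
  obtain ⟨u, hu0, hu1, -⟩ :=
    exists_continuous_zero_one_of_isClosed (hA g).isClosed isClosed_singleton hdisj
  exact ⟨u.comp g, fun x hx => hu0 (mem_image_of_mem g hx), fun x hx => hu1 (not_not.1 hx)⟩

theorem sfin_fCovers_of_isEmpty [IsEmpty X] (hmu : ∀ K ∈ mu, K.Nonempty)
    (𝒜 : Set (Set (Set X))) : Sfin 𝒜 (fCovers mu) := by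
  refine sfin_of_empty_mem ⟨notMem_empty _, fun U hU => absurd hU (notMem_empty U), ?_⟩
  exact fun K hK => isEmptyElim (hmu K hK).some

theorem image_preimage_ball_mem_fCovers {ε : ℝ} {S : Set C(X, ℝ)}
    (hS : S ∈ zeroApproximating lam ε) (huniv : ∀ f ∈ S, f ⁻¹' Metric.ball 0 ε ≠ univ) :
    (fun f : C(X, ℝ) => f ⁻¹' Metric.ball 0 ε) '' S ∈ fCovers lam := by
  refine ⟨?_, ?_, fun K hK => ?_⟩
  · rintro ⟨f, hf, hfuniv⟩
    exact huniv f hf hfuniv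
  · rintro _ ⟨f, -, rfl⟩
    exact isCozero_preimage Metric.isOpen_ball f
  · obtain ⟨f, hf, hfK⟩ := hS.2 K hK
    exact ⟨_, mem_image_of_mem _ hf, hfK⟩

theorem sfin_zeroApproximating_of_sfin_fCovers (h : Sfin (fCovers lam) (fCovers mu)) (ε : ℝ) :
    Sfin (zeroApproximating lam ε) (zeroApproximating mu ε) := by
  intro A hA
  have zero_notMem {B : ℕ → Set C(X, ℝ)} (hBA : ∀ n, B n ⊆ A n) : 0 ∉ ⋃ n, B n :=
    fun h0 => let ⟨n, hn⟩ := mem_iUnion.1 h0; (hA n).1 (hBA n hn)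
  -- A function below `ε` on all of `X` yields the member `univ`, which a cover must not contain,
  -- but such a function already suffices as the whole selection.
  by_cases hsmall : ∃ j, ∃ f ∈ A j, f ⁻¹' Metric.ball 0 ε = univ
  · obtain ⟨j, f, hf, hfuniv⟩ := hsmall
    have hBA : ∀ n, {g | g = f ∧ n = j} ⊆ A n := by
      rintro n g ⟨rfl, rfl⟩
      exact hf
    refine ⟨_, fun n => ⟨(finite_singleton f).subset fun g hg => hg.1, hBA n⟩,
      zero_notMem hBA, fun K _ => ⟨f, mem_iUnion_of_mem j ⟨rfl, rfl⟩, ?_⟩⟩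
    exact (subset_univ K).trans_eq hfuniv.symm
  · push Not at hsmall
    obtain ⟨B, hBA, -, -, hcov⟩ := h.exists_image_iUnion_mem _
      fun n => image_preimage_ball_mem_fCovers (hA n) (hsmall n)
    refine ⟨B, hBA, zero_notMem fun n => (hBA n).2, fun K hK => ?_⟩
    obtain ⟨_, ⟨f, hf, rfl⟩, hfK⟩ := hcov K hK
    exact ⟨f, hf, hfK⟩

theorem sfin_omegaPt_of_sfin_fCovers (hlam_ne : lam.Nonempty)
    (hlam_dir : DirectedOn (· ⊆ ·) lam) (hmu_ne : mu.Nonempty) (hmu_dir : DirectedOn (· ⊆ ·) mu)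
    (h : Sfin (fCovers lam) (fCovers mu)) :
    Sfin (OmegaPt (setOpenTopology lam) 0) (OmegaPt (setOpenTopology mu) 0) :=
  sfin_of_forall_sfin (𝒞 := fun k => zeroApproximating mu (1 / ((k : ℝ) + 1)))
    (fun _ => (sfin_zeroApproximating_of_sfin_fCovers h _).mono
      (fun _ hS => (mem_omegaPt_zero_iff hlam_ne hlam_dir).1 hS _ Nat.one_div_pos_of_nat)
      Subset.rfl)
    fun _ => iUnion_mem_omegaPt_zero hmu_ne hmu_dir

/-- The functions equal to `1` off some member of `𝒰`: the set of functions that codes the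
cover `𝒰`. -/
def oneOffMember (𝒰 : Set (Set X)) : Set C(X, ℝ) :=
  {f | ∃ U ∈ 𝒰, EqOn f 1 Uᶜ}

theorem oneOffMember_mem_zeroApproximating (hcc : ∀ K ∈ lam, IsCCompact K) {𝒰 : Set (Set X)}
    (h𝒰 : 𝒰 ∈ fCovers lam) {ε : ℝ} (hε : 0 < ε) :
    oneOffMember 𝒰 ∈ zeroApproximating lam ε := by
  obtain ⟨huniv, hcoz, hcov⟩ := h𝒰
  constructor
  · rintro ⟨U, hU, hU1⟩
    have : U = univ := eq_univ_of_forall fun x => by_contra fun hx => zero_ne_one (hU1 hx)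
    exact huniv (this ▸ hU)
  · intro K hK
    obtain ⟨U, hU, hKU⟩ := hcov K hK
    obtain ⟨f, hf0, hf1⟩ := (hcc K hK).exists_eqOn_zero_one (hcoz U hU) hKU
    exact ⟨f, ⟨U, hU, hf1⟩, fun x hx => (hf0 hx).symm ▸ Metric.mem_ball_self hε⟩

theorem sfin_fCovers_of_sfin_omegaPt (hlam_ne : lam.Nonempty)
    (hlam_dir : DirectedOn (· ⊆ ·) lam) (hcc : ∀ K ∈ lam, IsCCompact K)
    (hmu_ne : mu.Nonempty) (hmu_dir : DirectedOn (· ⊆ ·) mu)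
    (h : Sfin (OmegaPt (setOpenTopology lam) 0) (OmegaPt (setOpenTopology mu) 0)) :
    Sfin (fCovers lam) (fCovers mu) := by
  intro 𝒰 h𝒰
  obtain ⟨B, hB, hBmu⟩ := h (fun n => oneOffMember (𝒰 n)) fun n =>
    (mem_omegaPt_zero_iff hlam_ne hlam_dir).2 fun _ =>
      oneOffMember_mem_zeroApproximating hcc (h𝒰 n)
  choose! W hW𝒰 hW1 using fun n f (hf : f ∈ B n) => (hB n).2 hf
  have hV𝒰 : ∀ n, W n '' B n ⊆ 𝒰 n := fun n => image_subset_iff.2 (hW𝒰 n)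
  refine ⟨fun n => W n '' B n, fun n => ⟨(hB n).1.image _, hV𝒰 n⟩, ?_, ?_, fun K hK => ?_⟩
  · exact fun hU => let ⟨n, hn⟩ := mem_iUnion.1 hU; (h𝒰 n).1 (hV𝒰 n hn)
  · exact fun U hU => let ⟨n, hn⟩ := mem_iUnion.1 hU; (h𝒰 n).2.1 U (hV𝒰 n hn)
  · obtain ⟨f, hf, hfK⟩ := ((mem_omegaPt_zero_iff hmu_ne hmu_dir).1 hBmu 1 one_pos).2 K hK
    obtain ⟨n, hn⟩ := mem_iUnion.1 hf
    exact ⟨W n f, mem_iUnion_of_mem n (mem_image_of_mem _ hn),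
      subset_of_mapsTo_ball_of_eqOn_one hfK (hW1 n f hn)⟩

theorem sfin_omega_iff_sfin_fCovers_general (hlam_ne : lam.Nonempty)
    (hlam_dir : DirectedOn (· ⊆ ·) lam) (hlam_cc : ∀ K ∈ lam, IsCCompact K)
    (hmu_ne : mu.Nonempty) (hmu_dir : DirectedOn (· ⊆ ·) mu) :
    Sfin (OmegaPt (setOpenTopology lam) (0 : C(X, ℝ)))
        (OmegaPt (setOpenTopology mu) (0 : C(X, ℝ))) ↔
      Sfin (fCovers lam) (fCovers mu) :=
  ⟨sfin_fCovers_of_sfin_omegaPt hlam_ne hlam_dir hlam_cc hmu_ne hmu_dir,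
    sfin_omegaPt_of_sfin_fCovers hlam_ne hlam_dir hmu_ne hmu_dir⟩

end

/-- For a Tychonoff space `X` and `λ, μ ∈ Ψ` with `μ ⊆ λ`, `C(X)` satisfies
`S_fin((Ω_0)^λ, (Ω_0)^μ)` iff `X` has property `S_fin(Λ(λ), Λ(μ))`. -/
theorem sfin_omega_iff_sfin_fCovers
    {X : Type*} [TopologicalSpace X] [T35Space X]
    (lam mu : Set (Set X)) (hlam : MemPsi lam) (hmu : MemPsi mu) (hsub : mu ⊆ lam) :
    Sfin (OmegaPt (setOpenTopology lam) (0 : C(X, ℝ)))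
        (OmegaPt (setOpenTopology mu) (0 : C(X, ℝ))) ↔
      Sfin (fCovers lam) (fCovers mu) := by
  rcases isEmpty_or_nonempty X with _ | _
  · exact iff_of_true (sfin_omegaPt_of_subsingleton _ _ _) (sfin_fCovers_of_isEmpty hmu.nonempty _)
  · exact sfin_omega_iff_sfin_fCovers_general hlam.family_nonempty hlam.directedOn hlam.ccompact
      hmu.family_nonempty hmu.directedOn
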